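/- (Proposition 1) Let $G$ be a connected finite undirected graph on vertices $\{1, \dots, n\}$, let $v \in \{1,\dots,n\}$, and for $x > 0$ let $\tilde{L}(x)$ be the perturbed Laplacian obtained by attaching pendant vertex $n+1$ to $v$ with edge weight $x$. Then there exists $a > 0$ such that for every $x \in (0, a]$ and every unit eigenvector $\Phi$ of $\tilde{L}(x)$ for its second smallest eigenvalue with $\Phi(n+1) \ge 0$, one has $\Phi(n+1) > \Phi(i)$ for all $i \in \{1, \dots, n\}$; that is, the new vertex $n+1$ is the strict maximum point of the Fiedler vector of the perturbed graph for all sufficiently small weights $x$. -/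

import Mathlib

open Matrix BigOperators

/-- The Laplacian of the graph obtained from a graph `G` on `Fin n` by attaching a new pendant
vertex (the vertex `Fin.last n` of `Fin (n+1)`) to the vertex `v` by an edge of weight `x`:
`L̃(x) = [[L, 0], [0, 0]] + x (e_v - e_{n+1})(e_v - e_{n+1})ᵀ`. -/
noncomputable def pertLap (n : ℕ) (G : SimpleGraph (Fin n)) [DecidableRel G.Adj] (v : Fin n)
    (x : ℝ) : Matrix (Fin (n+1)) (Fin (n+1)) ℝ :=
  Matrix.reindex finSumFinEquiv finSumFinEquiv
      (Matrix.fromBlocks (G.lapMatrix ℝ) 0 0 0) +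
    x • Matrix.vecMulVec
      (fun i => if i = Fin.castSucc v then 1 else if i = Fin.last n then -1 else 0)
      (fun i => if i = Fin.castSucc v then 1 else if i = Fin.last n then -1 else 0)

/-!
On the span of the constants and the indicator of the pendant vertex, the quadratic form of `L̃(x)`
is at most `2x` times the squared norm, so `λ₂ ≤ 2x` by the min-max principle. Hence a unit Fiedler
vector has Dirichlet energy at most `2x` on `G`, and since `G` is connected it is nearly
constant there when `x` is small. Being orthogonal to the constants, it must then carry a
non-negligible positive value at the pendant vertex and be nearly a nonpositive constant on `G`.
-/

open Module RCLike
open scoped InnerProductSpace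

section CourantFischer

variable {𝕜 : Type*} [RCLike 𝕜] {m : ℕ}

lemma eq_of_monotone_of_map_univ_eq {α : Type*} [PartialOrder α] {f g : Fin m → α}
    (hf : Monotone f) (hg : Monotone g)
    (h : Finset.univ.val.map f = Finset.univ.val.map g) : f = g := by
  rw [Fin.univ_val_map, Fin.univ_val_map, Multiset.coe_eq_coe] at h
  exact List.ofFn_injective
    (h.eq_of_pairwise' hf.sortedLE_ofFn.pairwise hg.sortedLE_ofFn.pairwise)

section Operator

variable {E : Type*} [NormedAddCommGroup E] [InnerProductSpace 𝕜 E]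

lemma exists_orthonormal_eigenbasis_of_roots_charpoly_eq [FiniteDimensional 𝕜 E] {T : E →ₗ[𝕜] E}
    (hT : T.IsSymmetric) (hm : finrank 𝕜 E = m) {μ : Fin m → ℝ} (hμ : Monotone μ)
    (hroots : T.charpoly.roots = Finset.univ.val.map fun i => (μ i : 𝕜)) :
    ∃ b : OrthonormalBasis (Fin m) 𝕜 E, ∀ i, T (b i) = (μ i : 𝕜) • b i := by
  have hrev : hT.eigenvalues hm ∘ Fin.revPerm = μ := by
    refine eq_of_monotone_of_map_univ_eq
      ((hT.eigenvalues_antitone hm).comp Fin.rev_anti) hμ ?_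
    refine Multiset.map_injective (ofReal_injective (K := 𝕜)) ?_
    rw [← Multiset.map_map, Multiset.map_univ_val_equiv, Multiset.map_map, Multiset.map_map,
      ← hT.roots_charpoly_eq_eigenvalues hm, hroots]
    rfl
  refine ⟨(hT.eigenvectorBasis hm).reindex Fin.revPerm.symm, fun i => ?_⟩
  rw [OrthonormalBasis.reindex_apply, Equiv.symm_symm, hT.apply_eigenvectorBasis, ← hrev]
  rfl

lemma re_inner_apply_self_eq_sum {ι : Type*} [Fintype ι] {T : E →ₗ[𝕜] E}
    {μ : ι → ℝ} (b : OrthonormalBasis ι 𝕜 E) (hb : ∀ i, T (b i) = (μ i : 𝕜) • b i) (w : E) :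
    re ⟪w, T w⟫_𝕜 = ∑ i, μ i * ‖⟪b i, w⟫_𝕜‖ ^ 2 := by
  have hTw : T w = ∑ i, (⟪b i, w⟫_𝕜 * μ i) • b i := by
    conv_lhs => rw [← b.sum_repr' w]
    simp only [map_sum, map_smul, hb, smul_smul]
  simp only [hTw, inner_sum, inner_smul_right, map_sum]
  refine Finset.sum_congr rfl fun i _ => ?_
  rw [mul_right_comm, re_mul_ofReal, ← inner_conj_symm w, RCLike.mul_conj, ← ofReal_pow, ofReal_re,
    mul_comm]

lemma exists_submodule_finrank_eq_forall_re_inner_le {T : E →ₗ[𝕜] E} {μ : Fin m → ℝ}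
    (hμ : Monotone μ) (b : OrthonormalBasis (Fin m) 𝕜 E)
    (hb : ∀ i, T (b i) = (μ i : 𝕜) • b i) (k : Fin m) :
    ∃ W : Submodule 𝕜 E, finrank 𝕜 W = k + 1 ∧ ∀ w ∈ W, re ⟪w, T w⟫_𝕜 ≤ μ k * ‖w‖ ^ 2 := by
  refine ⟨Submodule.span 𝕜 (Set.range (b ∘ ((↑) : Finset.Iic k → Fin m))), ?_, fun w hw => ?_⟩
  · rw [finrank_span_eq_card (b.orthonormal.linearIndependent.comp _ Subtype.val_injective),
      Fintype.card_coe, Fin.card_Iic]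
  · have hzero : ∀ i, k < i → ⟪b i, w⟫_𝕜 = 0 := fun i hi => by
      induction hw using Submodule.span_induction with
      | mem _ h =>
        obtain ⟨j, rfl⟩ := h
        exact b.inner_eq_zero ((Finset.mem_Iic.1 j.2).trans_lt hi).ne'
      | zero => exact inner_zero_right _
      | add _ _ _ _ h₁ h₂ => rw [inner_add_right, h₁, h₂, add_zero]
      | smul _ _ _ h => rw [inner_smul_right, h, mul_zero]
    rw [re_inner_apply_self_eq_sum b hb, ← b.sum_sq_norm_inner_right, Finset.mul_sum]
    refine Finset.sum_le_sum fun i _ => ?_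
    rcases le_or_gt i k with hi | hi
    · gcongr
      exact hμ hi
    · simp [hzero i hi]

lemma eigenvalue_le_of_forall_re_inner_le {T : E →ₗ[𝕜] E} {μ : Fin m → ℝ} (hμ : Monotone μ)
    (b : OrthonormalBasis (Fin m) 𝕜 E) (hb : ∀ i, T (b i) = (μ i : 𝕜) • b i) (k : Fin m)
    {W : Submodule 𝕜 E} (hW : k < finrank 𝕜 W) {c : ℝ}
    (hc : ∀ w ∈ W, re ⟪w, T w⟫_𝕜 ≤ c * ‖w‖ ^ 2) : μ k ≤ c := by
  have : FiniteDimensional 𝕜 E := b.toBasis.finiteDimensional_of_finite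
  let coords : W →ₗ[𝕜] (Finset.Iio k → 𝕜) :=
    LinearMap.pi fun i => (innerₛₗ 𝕜 (b i)).comp W.subtype
  have hker : LinearMap.ker coords ≠ ⊥ := LinearMap.ker_ne_bot_of_finrank_lt (by
    rwa [finrank_fintype_fun_eq_card, Fintype.card_coe, Fin.card_Iio])
  obtain ⟨⟨w, hwW⟩, hw, hw0⟩ := Submodule.exists_mem_ne_zero_of_ne_bot hker
  have hzero : ∀ i < k, ⟪b i, w⟫_𝕜 = 0 := fun i hi =>
    congrFun (LinearMap.mem_ker.1 hw) ⟨i, Finset.mem_Iio.2 hi⟩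
  have hle : μ k * ‖w‖ ^ 2 ≤ re ⟪w, T w⟫_𝕜 := by
    rw [re_inner_apply_self_eq_sum b hb, ← b.sum_sq_norm_inner_right, Finset.mul_sum]
    refine Finset.sum_le_sum fun i _ => ?_
    rcases lt_or_ge i k with hi | hi
    · simp [hzero i hi]
    · gcongr
      exact hμ hi
  have hpos : 0 < ‖w‖ ^ 2 := pow_pos (norm_pos_iff.2 fun h => hw0 (Subtype.ext h)) 2
  exact le_of_mul_le_mul_right (hle.trans (hc w hwW)) hpos

theorem isLeast_eigenvalue_of_isSymmetric [FiniteDimensional 𝕜 E] {T : E →ₗ[𝕜] E}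
    (hT : T.IsSymmetric) (hm : finrank 𝕜 E = m) {μ : Fin m → ℝ} (hμ : Monotone μ)
    (hroots : T.charpoly.roots = Finset.univ.val.map fun i => (μ i : 𝕜)) (k : Fin m) :
    IsLeast {c : ℝ | ∃ W : Submodule 𝕜 E, finrank 𝕜 W = k + 1 ∧
      ∀ w ∈ W, re ⟪w, T w⟫_𝕜 ≤ c * ‖w‖ ^ 2} (μ k) := by
  obtain ⟨b, hb⟩ := exists_orthonormal_eigenbasis_of_roots_charpoly_eq hT hm hμ hroots
  exact ⟨exists_submodule_finrank_eq_forall_re_inner_le hμ b hb k, fun _ ⟨_, hW, hc⟩ =>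
    eigenvalue_le_of_forall_re_inner_le hμ b hb k (hW ▸ Nat.lt_succ_self _) hc⟩

end Operator

theorem isLeast_eigenvalue_of_isHermitian {ι : Type*} [Fintype ι] [DecidableEq ι]
    {A : Matrix ι ι 𝕜} (hA : A.IsHermitian) (hm : Fintype.card ι = m) {μ : Fin m → ℝ}
    (hμ : Monotone μ) (hroots : A.charpoly.roots = Finset.univ.val.map fun i => (μ i : 𝕜))
    (k : Fin m) :
    IsLeast {c : ℝ | ∃ W : Submodule 𝕜 (ι → 𝕜), finrank 𝕜 W = k + 1 ∧
      ∀ w ∈ W, re (star w ⬝ᵥ A *ᵥ w) ≤ c * re (star w ⬝ᵥ w)} (μ k) := by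
  have hcharpoly : A.toEuclideanLin.charpoly = A.charpoly := by
    rw [toEuclideanLin, toLpLin_eq_toLin, charpoly_toLin]
  have hform (w : EuclideanSpace 𝕜 ι) :
      re ⟪w, A.toEuclideanLin w⟫_𝕜 = re (star w.ofLp ⬝ᵥ A *ᵥ w.ofLp) := by
    rw [EuclideanSpace.inner_eq_star_dotProduct, dotProduct_comm]
    rfl
  have hnorm (w : EuclideanSpace 𝕜 ι) : ‖w‖ ^ 2 = re (star w.ofLp ⬝ᵥ w.ofLp) := by
    rw [← inner_self_eq_norm_sq (𝕜 := 𝕜), EuclideanSpace.inner_eq_star_dotProduct,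
      dotProduct_comm]
  let e := WithLp.linearEquiv 2 𝕜 (ι → 𝕜)
  convert isLeast_eigenvalue_of_isSymmetric (isSymmetric_toEuclideanLin_iff.2 hA)
    (finrank_euclideanSpace.trans hm) hμ (hcharpoly ▸ hroots) k using 1
  ext c
  constructor
  · rintro ⟨W, hW, hc⟩
    refine ⟨W.map e.symm.toLinearMap, by rw [LinearEquiv.finrank_map_eq, hW], ?_⟩
    rintro _ ⟨w, hw, rfl⟩
    rw [hform, hnorm]
    exact hc w hw
  · rintro ⟨W, hW, hc⟩
    refine ⟨W.map e.toLinearMap, by rw [LinearEquiv.finrank_map_eq, hW], ?_⟩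
    rintro _ ⟨w, hw, rfl⟩
    have := hc w hw
    rwa [hform, hnorm] at this

end CourantFischer

section DirichletEnergy

variable {V : Type*} [Fintype V] [DecidableEq V] {G : SimpleGraph V} [DecidableRel G.Adj]

lemma sq_sub_le_dotProduct_lapMatrix_mulVec {R : Type*} [Field R] [LinearOrder R]
    [IsStrictOrderedRing R] (u : V → R) {i j : V} (hij : G.Adj i j) :
    (u i - u j) ^ 2 ≤ u ⬝ᵥ G.lapMatrix R *ᵥ u := by
  have hpair := Finset.add_le_sum
    (f := fun p : V × V => if G.Adj p.1 p.2 then (u p.1 - u p.2) ^ 2 else 0)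
    (fun p _ => by split_ifs <;> positivity)
    (Finset.mem_univ (i, j)) (Finset.mem_univ (j, i)) (by simp [hij.ne])
  rw [Fintype.sum_prod_type] at hpair
  simp only [hij, hij.symm, if_true, sub_sq_comm (u j)] at hpair
  rw [← toLinearMap₂'_apply', G.lapMatrix_toLinearMap₂' R]
  linarith

lemma abs_sub_le_length_mul_sqrt_dotProduct_lapMatrix_mulVec (u : V → ℝ) {i j : V}
    (p : G.Walk i j) : |u i - u j| ≤ p.length * √(u ⬝ᵥ G.lapMatrix ℝ *ᵥ u) := by
  induction p with
  | nil => simp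
  | @cons i k j hik p ih =>
    calc |u i - u j| ≤ |u i - u k| + |u k - u j| := abs_sub_le _ _ _
      _ ≤ √(u ⬝ᵥ G.lapMatrix ℝ *ᵥ u) + p.length * √(u ⬝ᵥ G.lapMatrix ℝ *ᵥ u) :=
        add_le_add (Real.abs_le_sqrt (sq_sub_le_dotProduct_lapMatrix_mulVec u hik)) ih
      _ = (p.cons hik).length * √(u ⬝ᵥ G.lapMatrix ℝ *ᵥ u) := by
        rw [SimpleGraph.Walk.length_cons]
        push_cast
        ring

lemma abs_sub_le_card_mul_sqrt_dotProduct_lapMatrix_mulVec (hG : G.Preconnected) (u : V → ℝ)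
    (i j : V) : |u i - u j| ≤ Fintype.card V * √(u ⬝ᵥ G.lapMatrix ℝ *ᵥ u) := by
  obtain ⟨p, hp⟩ := (hG i j).exists_isPath
  refine (abs_sub_le_length_mul_sqrt_dotProduct_lapMatrix_mulVec u p).trans ?_
  gcongr
  exact hp.length_lt.le

end DirichletEnergy

section Pendant

variable {n : ℕ} (G : SimpleGraph (Fin n)) [DecidableRel G.Adj] (v : Fin n) (x : ℝ)

lemma isHermitian_pertLap : (pertLap n G v x).IsHermitian :=
  .add (.submatrix (.fromBlocks (G.isHermitian_lapMatrix ℝ) (by simp) isHermitian_zero) _)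
    (.smul (posSemidef_vecMulVec_self_star _).isHermitian (.all x))

lemma dotProduct_pertLap_mulVec (Ψ Φ : Fin (n + 1) → ℝ) :
    Ψ ⬝ᵥ pertLap n G v x *ᵥ Φ = Fin.init Ψ ⬝ᵥ G.lapMatrix ℝ *ᵥ Fin.init Φ +
      x * ((Ψ v.castSucc - Ψ (Fin.last n)) * (Φ v.castSucc - Φ (Fin.last n))) := by
  have hlast : (finSumFinEquiv (m := n) (n := 1)).symm (Fin.last n) = Sum.inr 0 :=
    finSumFinEquiv_symm_apply_natAdd 0
  have hedge (Θ : Fin (n + 1) → ℝ) :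
      (fun i => if i = Fin.castSucc v then 1 else if i = Fin.last n then -1 else 0) ⬝ᵥ Θ =
        Θ v.castSucc - Θ (Fin.last n) := by
    simp [dotProduct, Fin.sum_univ_castSucc, (Fin.castSucc_lt_last _).ne,
      (Fin.castSucc_lt_last _).ne', sub_eq_add_neg]
  rw [pertLap, add_mulVec, dotProduct_add, smul_mulVec, vecMulVec_mulVec, dotProduct_smul, hedge,
    op_smul_eq_smul, dotProduct_smul, dotProduct_comm Ψ (fun i => ite _ _ _), hedge]
  congr 1
  · simp [dotProduct, mulVec, Fin.sum_univ_castSucc, hlast, Fin.init]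
  · rw [smul_eq_mul, smul_eq_mul, mul_comm (Φ _ - _)]

variable {G v x}

lemma dotProduct_lapMatrix_mulVec_init_le (hx : 0 ≤ x) (Φ : Fin (n + 1) → ℝ) :
    Fin.init Φ ⬝ᵥ G.lapMatrix ℝ *ᵥ Fin.init Φ ≤ Φ ⬝ᵥ pertLap n G v x *ᵥ Φ := by
  rw [dotProduct_pertLap_mulVec]
  exact le_add_of_nonneg_right (mul_nonneg hx (mul_self_nonneg _))

lemma sum_eq_zero_of_pertLap_mulVec_eq_smul {c : ℝ} (hc : c ≠ 0) {Φ : Fin (n + 1) → ℝ}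
    (hΦ : pertLap n G v x *ᵥ Φ = c • Φ) : ∑ i, Φ i = 0 := by
  have hone : (1 : Fin (n + 1) → ℝ) ⬝ᵥ pertLap n G v x *ᵥ Φ = 0 := by
    have hconst : Fin.init (1 : Fin (n + 1) → ℝ) ᵥ* G.lapMatrix ℝ = 0 := by
      rw [← mulVec_transpose, G.isSymm_lapMatrix ℝ]
      exact G.lapMatrix_mulVec_const_eq_zero
    rw [dotProduct_pertLap_mulVec, dotProduct_mulVec, hconst]
    simp
  rw [hΦ, dotProduct_smul, one_dotProduct, smul_eq_mul] at hone
  exact (mul_eq_zero.1 hone).resolve_left hc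

lemma eq_last_of_dotProduct_pertLap_mulVec_nonpos (hG : G.Preconnected) (hx : 0 < x)
    {Φ : Fin (n + 1) → ℝ} (h : Φ ⬝ᵥ pertLap n G v x *ᵥ Φ ≤ 0) (i : Fin (n + 1)) :
    Φ i = Φ (Fin.last n) := by
  have henergy : Fin.init Φ ⬝ᵥ G.lapMatrix ℝ *ᵥ Fin.init Φ = 0 :=
    ((dotProduct_lapMatrix_mulVec_init_le hx.le Φ).trans h).antisymm
      ((G.posSemidef_lapMatrix ℝ).dotProduct_mulVec_nonneg _)
  have hpendant : Φ v.castSucc = Φ (Fin.last n) := by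
    rw [dotProduct_pertLap_mulVec, henergy, zero_add] at h
    exact sub_eq_zero.1 (mul_self_eq_zero.1 ((nonpos_of_mul_nonpos_right h hx).antisymm
      (mul_self_nonneg _)))
  have hinit := (G.lapMatrix_toLinearMap₂'_apply'_eq_zero_iff_forall_reachable (Fin.init Φ)).1
    (by rwa [toLinearMap₂'_apply'])
  exact Fin.lastCases rfl (fun j => (hinit j v (hG j v)).trans hpendant) i

lemma isLeast_second_eigenvalue_pertLap {μ : Fin (n + 1) → ℝ} (hμ : Monotone μ)
    (hroots : (pertLap n G v x).charpoly.roots = Finset.univ.val.map μ) :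
    IsLeast {c : ℝ | ∃ W : Submodule ℝ (Fin (n + 1) → ℝ), finrank ℝ W = 2 ∧
      ∀ w ∈ W, w ⬝ᵥ pertLap n G v x *ᵥ w ≤ c * (w ⬝ᵥ w)} (μ 1) := by
  have hone : ((1 : Fin (n + 1)) : ℕ) = 1 :=
    Nat.mod_eq_of_lt (Nat.succ_lt_succ v.pos)
  simpa only [hone, one_add_one_eq_two, star_trivial, re_to_real] using
    isLeast_eigenvalue_of_isHermitian (isHermitian_pertLap G v x) (Fintype.card_fin _) hμ hroots 1

lemma second_eigenvalue_pertLap_pos {μ : Fin (n + 1) → ℝ} (hμ : Monotone μ)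
    (hroots : (pertLap n G v x).charpoly.roots = Finset.univ.val.map μ)
    (hG : G.Preconnected) (hx : 0 < x) : 0 < μ 1 := by
  obtain ⟨W, hW, hle⟩ := (isLeast_second_eigenvalue_pertLap hμ hroots).1
  by_contra! hneg
  have hconst : W ≤ Submodule.span ℝ {1} := fun w hw => by
    have hform : w ⬝ᵥ pertLap n G v x *ᵥ w ≤ 0 :=
      (hle w hw).trans (mul_nonpos_of_nonpos_of_nonneg hneg (dotProduct_self_star_nonneg w))
    refine Submodule.mem_span_singleton.2 ⟨w (Fin.last n), funext fun i => ?_⟩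
    simp [eq_last_of_dotProduct_pertLap_mulVec_nonpos hG hx hform i]
  have := (Submodule.finrank_mono hconst).trans (finrank_span_le_card _)
  simp [hW] at this

lemma second_eigenvalue_pertLap_le {μ : Fin (n + 1) → ℝ} (hμ : Monotone μ)
    (hroots : (pertLap n G v x).charpoly.roots = Finset.univ.val.map μ)
    (hx : 0 ≤ x) : μ 1 ≤ 2 * x := by
  let pendant : Fin (n + 1) → ℝ := Pi.single (Fin.last n) 1
  have hindep : LinearIndependent ℝ ![1, pendant] := by
    refine LinearIndependent.pair_iff.2 fun α β h => ?_
    have hα : α = 0 := by simpa [pendant] using congrFun h v.castSucc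
    have hβ : α + β = 0 := by simpa [pendant] using congrFun h (Fin.last n)
    exact ⟨hα, by simpa [hα] using hβ⟩
  refine (isLeast_second_eigenvalue_pertLap hμ hroots).2
    ⟨Submodule.span ℝ (Set.range ![1, pendant]), by rw [finrank_span_eq_card hindep]; simp, ?_⟩
  intro w hw
  rw [range_cons_cons_empty, Submodule.mem_span_pair] at hw
  obtain ⟨α, β, rfl⟩ := hw
  set w : Fin (n + 1) → ℝ := α • 1 + β • pendant
  have hinit (i : Fin n) : w i.castSucc = α := by simp [w, pendant]
  have hlast : w (Fin.last n) = α + β := by simp [w, pendant]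
  have hform : w ⬝ᵥ pertLap n G v x *ᵥ w = x * β ^ 2 := by
    have hconst : Fin.init w = α • fun _ => 1 := funext fun i => by simp [Fin.init, hinit]
    rw [dotProduct_pertLap_mulVec, hconst, mulVec_smul, G.lapMatrix_mulVec_const_eq_zero, hinit,
      hlast, smul_zero, dotProduct_zero]
    ring
  have hnorm : α ^ 2 + (α + β) ^ 2 ≤ w ⬝ᵥ w := by
    have hn : (1 : ℝ) ≤ n := by exact_mod_cast v.pos
    simp only [dotProduct, Fin.sum_univ_castSucc, hinit, hlast, Finset.sum_const,
      Finset.card_univ, Fintype.card_fin, nsmul_eq_mul]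
    nlinarith [sq_nonneg α]
  calc w ⬝ᵥ pertLap n G v x *ᵥ w = x * β ^ 2 := hform
    _ ≤ x * (2 * (α ^ 2 + (α + β) ^ 2)) := by gcongr; nlinarith [sq_nonneg (2 * α + β)]
    _ ≤ x * (2 * (w ⬝ᵥ w)) := by gcongr
    _ = 2 * x * (w ⬝ᵥ w) := by ring

end Pendant

section NearlyConstant

variable {V : Type*} [Fintype V] {u : V → ℝ} {ε : ℝ}

lemma abs_card_mul_sub_sum_le (hu : ∀ i j, |u i - u j| ≤ ε) (i : V) :
    |Fintype.card V * u i - ∑ j, u j| ≤ Fintype.card V * ε := by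
  calc |Fintype.card V * u i - ∑ j, u j| = |∑ j, (u i - u j)| := by simp
    _ ≤ ∑ j, |u i - u j| := Finset.abs_sum_le_sum_abs _ _
    _ ≤ ∑ _j : V, ε := Finset.sum_le_sum fun j _ => hu i j
    _ = Fintype.card V * ε := by simp

lemma lt_of_sum_add_eq_zero_of_abs_sub_le {t : ℝ} (ht : 0 ≤ t) (hsum : ∑ i, u i + t = 0)
    (hunit : ∑ i, u i ^ 2 + t ^ 2 = 1) (hu : ∀ i j, |u i - u j| ≤ ε)
    (hε : 4 * (Fintype.card V + 1) * ε ^ 2 < 1) (i : V) : u i < t := by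
  have hN : (1 : ℝ) ≤ Fintype.card V := by exact_mod_cast Fintype.card_pos_iff.2 ⟨i⟩
  have hmean (j : V) : |Fintype.card V * u j + t| ≤ Fintype.card V * ε := by
    rw [eq_neg_of_add_eq_zero_right hsum, ← sub_eq_add_neg]
    exact abs_card_mul_sub_sum_le hu j
  have hupper (j : V) : u j ≤ ε := by
    nlinarith [(abs_le.1 (hmean j)).2]
  suffices hlt : ε < t from (hupper i).trans_lt hlt
  by_contra! hle
  have hlower (j : V) : -(2 * ε) ≤ u j := by
    nlinarith [(abs_le.1 (hmean j)).1]
  have hsq : ∑ j, u j ^ 2 ≤ Fintype.card V * (2 * ε) ^ 2 := by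
    calc ∑ j, u j ^ 2 ≤ ∑ _j : V, (2 * ε) ^ 2 :=
          Finset.sum_le_sum fun j _ => sq_le_sq' (hlower j) ((hupper j).trans (by linarith))
      _ = Fintype.card V * (2 * ε) ^ 2 := by simp
  have htsq : t ^ 2 ≤ (2 * ε) ^ 2 := by gcongr; linarith
  linarith

end NearlyConstant

/-- **Proposition 1.** For a connected graph `G`, a vertex `v` and the perturbed
Laplacian `L̃(x)`, there exists `a > 0` such that for every `x ∈ (0, a]` and every unit
eigenvector `Φ` of `L̃(x)` for its second smallest eigenvalue `μ 1` (eigenvalues with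
multiplicity enumerated in increasing order by `μ`) with `Φ(n+1) ≥ 0`, the new vertex `n+1` is
the strict maximum point of `Φ`. -/
theorem fiedler_stmt_9 (n : ℕ) (G : SimpleGraph (Fin n)) [DecidableRel G.Adj]
    (hG : G.Connected) (v : Fin n) :
    ∃ a > (0 : ℝ), ∀ x : ℝ, 0 < x → x ≤ a →
      ∀ μ : Fin (n+1) → ℝ, Monotone μ →
        (pertLap n G v x).charpoly.roots = Finset.univ.val.map μ →
        ∀ Φ : Fin (n+1) → ℝ, ∑ i, Φ i ^ 2 = 1 →
          pertLap n G v x *ᵥ Φ = μ 1 • Φ → 0 ≤ Φ (Fin.last n) →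
          ∀ i : Fin n, Φ (Fin.castSucc i) < Φ (Fin.last n) := by
  have hn : (0 : ℝ) < n := by exact_mod_cast v.pos
  refine ⟨1 / (16 * (n + 1) * n ^ 2), by positivity, ?_⟩
  intro x hx hxa μ hμ hroots Φ hunit heig hlast
  have hμpos : 0 < μ 1 := second_eigenvalue_pertLap_pos hμ hroots hG.preconnected hx
  have hμle : μ 1 ≤ 2 * x := second_eigenvalue_pertLap_le hμ hroots hx.le
  have hsum : ∑ i, Φ i = 0 := sum_eq_zero_of_pertLap_mulVec_eq_smul hμpos.ne' heig
  have henergy : Fin.init Φ ⬝ᵥ G.lapMatrix ℝ *ᵥ Fin.init Φ ≤ 2 * x := by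
    have hrayleigh : Φ ⬝ᵥ pertLap n G v x *ᵥ Φ = μ 1 := by
      rw [heig, dotProduct_smul, smul_eq_mul, dotProduct]
      simp [← sq, hunit]
    exact (dotProduct_lapMatrix_mulVec_init_le hx.le Φ).trans (hrayleigh.trans_le hμle)
  have hosc (i j : Fin n) : |Fin.init Φ i - Fin.init Φ j| ≤ n * √(2 * x) := by
    refine (abs_sub_le_card_mul_sqrt_dotProduct_lapMatrix_mulVec hG.preconnected _ i j).trans ?_
    rw [Fintype.card_fin]
    gcongr
  have hsmall : 4 * (Fintype.card (Fin n) + 1) * (n * √(2 * x)) ^ 2 < 1 := by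
    rw [le_div_iff₀ (by positivity)] at hxa
    rw [mul_pow, Real.sq_sqrt (by positivity), Fintype.card_fin]
    linarith
  rw [Fin.sum_univ_castSucc] at hsum hunit
  exact lt_of_sum_add_eq_zero_of_abs_sub_le hlast hsum hunit hosc hsmall
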